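/- For every integer K ≥ 1 and every real p ∈ (0, 1], if N is a binomial random variable with K trials and success probability p, then E[(1/N)·1{N ≥ 1}] ≤ (1 − (1−p)^K)·2/(p·K); equivalently E[1/N | N ≥ 1] ≤ 2/(pK). In finite-sum form: Σ_{k=1}^{K} (1/k)·C(K, k)·p^k·(1−p)^{K−k} ≤ (1 − (1−p)^K)·2/(pK). -/

import Mathlib

/-! The reciprocal moment `E[1/(N + 1)]` has a closed form: the identity
`C(K, k) / (k + 1) = C(K + 1, k + 1) / (K + 1)` turns it into a binomial expansion of degree
`K + 1`. Since `1/k ≤ 2/(k + 1)` for `k ≥ 1`, the moment `E[(1/N)·1{N ≥ 1}]` is at most twice this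
closed form with its `k = 0` term removed. Every step survives replacing `1 - p` by a free
parameter `q`. -/

section Field

variable {𝕜 : Type*} [Field 𝕜] [CharZero 𝕜]

lemma one_div_add_one_mul_choose (n k : ℕ) :
    1 / ((k : 𝕜) + 1) * n.choose k = (n + 1).choose (k + 1) / (n + 1) := by
  rw [one_div_mul_eq_div, div_eq_div_iff k.cast_add_one_ne_zero n.cast_add_one_ne_zero, mul_comm]
  exact_mod_cast n.add_one_mul_choose_eq k

lemma sum_range_one_div_add_one_mul_choose_mul_pow (n : ℕ) {p : 𝕜} (hp : p ≠ 0) (q : 𝕜) :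
    ∑ k ∈ Finset.range (n + 1), 1 / ((k : 𝕜) + 1) * n.choose k * p ^ k * q ^ (n - k) =
      ((p + q) ^ (n + 1) - q ^ (n + 1)) / (p * (n + 1)) := by
  have hexpand : (p + q) ^ (n + 1) - q ^ (n + 1) =
      ∑ k ∈ Finset.range (n + 1), p ^ (k + 1) * q ^ (n - k) * (n + 1).choose (k + 1) := by
    rw [add_pow, Finset.sum_range_succ']
    simp
  rw [hexpand, Finset.sum_div]
  refine Finset.sum_congr rfl fun k _ ↦ ?_
  rw [one_div_add_one_mul_choose]
  field_simp
  ring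

lemma sum_Icc_one_div_add_one_mul_choose_mul_pow (n : ℕ) {p : 𝕜} (hp : p ≠ 0) (q : 𝕜) :
    ∑ k ∈ Finset.Icc 1 n, 1 / ((k : 𝕜) + 1) * n.choose k * p ^ k * q ^ (n - k) =
      ((p + q) ^ (n + 1) - q ^ (n + 1)) / (p * (n + 1)) - q ^ n := by
  rw [← sum_range_one_div_add_one_mul_choose_mul_pow n hp, Nat.range_succ_eq_Icc_zero,
    ← Finset.add_sum_Ioc_eq_sum_Icc n.zero_le, ← Finset.Icc_add_one_left_eq_Ioc]
  simp

end Field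

section LinearOrderedField

variable {𝕜 : Type*} [Field 𝕜] [LinearOrder 𝕜] [IsStrictOrderedRing 𝕜]

lemma one_div_le_two_mul_one_div_add_one {x : 𝕜} (hx : 1 ≤ x) : 1 / x ≤ 2 * (1 / (x + 1)) := by
  rw [mul_one_div, div_le_div_iff₀ (by linarith) (by linarith)]
  linarith

lemma sum_Icc_one_div_mul_choose_mul_pow_le (n : ℕ) {p q : 𝕜} (hp : 0 < p) (hq : 0 ≤ q) :
    ∑ k ∈ Finset.Icc 1 n, 1 / (k : 𝕜) * n.choose k * p ^ k * q ^ (n - k) ≤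
      2 * (((p + q) ^ (n + 1) - q ^ (n + 1)) / (p * (n + 1)) - q ^ n) := by
  rw [← sum_Icc_one_div_add_one_mul_choose_mul_pow n hp.ne', Finset.mul_sum]
  refine Finset.sum_le_sum fun k hk ↦ ?_
  have hk : (1 : 𝕜) ≤ k := Nat.one_le_cast.mpr (Finset.mem_Icc.mp hk).1
  calc 1 / (k : 𝕜) * n.choose k * p ^ k * q ^ (n - k)
      ≤ 2 * (1 / ((k : 𝕜) + 1)) * n.choose k * p ^ k * q ^ (n - k) := by
        gcongr
        exact one_div_le_two_mul_one_div_add_one hk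
    _ = 2 * (1 / ((k : 𝕜) + 1) * n.choose k * p ^ k * q ^ (n - k)) := by ring

theorem stmt8_general (K : ℕ) {p q : 𝕜} (hp : 0 < p) (hq : 0 ≤ q) :
    ∑ k ∈ Finset.Icc 1 K, 1 / (k : 𝕜) * K.choose k * p ^ k * q ^ (K - k) ≤
      ((p + q) ^ K - q ^ K) * (2 * (p + q)) / (p * (K + 1)) :=
  calc _ ≤ 2 * (((p + q) ^ (K + 1) - q ^ (K + 1)) / (p * (K + 1)) - q ^ K) :=
        sum_Icc_one_div_mul_choose_mul_pow_le K hp hq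
    _ = ((p + q) ^ K - q ^ K) * (2 * (p + q)) / (p * (K + 1)) - 2 * K / (K + 1) * q ^ K := by
        field_simp
        ring
    _ ≤ ((p + q) ^ K - q ^ K) * (2 * (p + q)) / (p * (K + 1)) :=
        sub_le_self _ (by positivity)

end LinearOrderedField

/-- Conditional reciprocal-moment bound from the proof of Lemma A.3:
for `N ~ Binomial(K, p)`, `E[(1/N)·1{N ≥ 1}] ≤ (1 − (1−p)^K)·2/(pK)`, i.e.
`E[1/N | N ≥ 1] ≤ 2/(pK)`, in finite-sum form. -/
theorem stmt8 (K : ℕ) (hK : 1 ≤ K) (p : ℝ) (hp0 : 0 < p) (hp1 : p ≤ 1) :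
    ∑ k ∈ Finset.Icc 1 K,
        (1 / (k : ℝ)) * (K.choose k : ℝ) * p ^ k * (1 - p) ^ (K - k)
      ≤ (1 - (1 - p) ^ K) * 2 / (p * K) := by
  have hpow : 0 ≤ 1 - (1 - p) ^ K :=
    sub_nonneg.mpr (pow_le_one₀ (sub_nonneg.mpr hp1) (sub_le_self 1 hp0.le))
  refine (stmt8_general K hp0 (sub_nonneg.mpr hp1)).trans ?_
  rw [add_sub_cancel, one_pow, mul_one]
  gcongr
  exact le_add_of_nonneg_right zero_le_one
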